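/- arXiv:2307.14566 — 2 statements merged into one kernel-verified Lean document; each statement's English description precedes it below -/
import Mathlib

section
/- Let p ∈ ℕ. Then the p-th central moment μ_{p,ℓ}[ssac] of the sum of squared autocorrelations, taken over all binary sequences of length ℓ with the uniform probability measure, is a quasi-polynomial function of ℓ whose coefficients are all rational numbers. -/
/-!
Expanding `ssac f ^ k` and taking expectations, the `k`-th moment of `ssac` is the number of tuples
`x` in `{1, …, ℓ}^(4k)` that solve `k` homogeneous linear equations and take every value an even
number of times (`expect_ssac_pow`). Whether `x` counts depends only on the signs of homogeneous
linear forms in `x`, so this is a lattice point count of the open cube `(0, t)^(4k)`, `t = ℓ + 1`,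
weighted by a function in the ring `pqp` generated by linear forms, periodic functions and
indicators of homogeneous half-spaces (`pqp_momentWeight`).

The ring `pqp` is closed under summing one variable `y` over `0 < y < τ x` (`pqp_sum_Ioo`). The
summand is a combination of terms `c(x) u(y) [α(x) < y < β(x)]` with `α`, `β` rational linear forms
and `u` a quasi-polynomial; if `F` is an antidifference of `u`, such a term sums to
`c(x) (F(⌈β(x)⌉ - 1) - F(⌊α(x)⌋)) [α(x) < β(x)]`. The chambers stay homogeneous because
`α < β` already forces `⌊α⌋ < ⌈β⌉`, which makes the telescoped formula exact on the whole chamber.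

After all variables are summed out, a homogeneous chamber in the single variable `t` contains every
`t > 0` or none, so the count is a quasi-polynomial for all `t > 0`, that is, for all `ℓ ≥ 0`
(`exists_qp_moment`). Central moments are polynomials in the moments, and quasi-polynomials form a
ring.
-/

open Finset Filter

noncomputable section

/-- The binary sequence of length `ℓ` determined by sign choices `ε`. -/
def seqOf (ℓ : ℕ) (ε : Fin ℓ → Bool) : ℤ → ℤ := fun j =>
  if h : 0 ≤ j ∧ j < (ℓ : ℤ) then (if ε ⟨j.toNat, by omega⟩ then 1 else -1) else 0

/-- Aperiodic autocorrelation of `f` at shift `s`. -/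
def autocorr (f : ℤ → ℤ) (s : ℤ) : ℤ := ∑ᶠ j : ℤ, f (j + s) * f j

/-- The sum of squares of all aperiodic autocorrelations. -/
def ssac (f : ℤ → ℤ) : ℝ := ∑ᶠ s : ℤ, ((autocorr f s : ℝ)) ^ 2

/-- The demerit factor of `f`. -/
def ADF (f : ℤ → ℤ) : ℝ :=
  (∑ᶠ s ∈ {s : ℤ | s ≠ 0}, ((autocorr f s : ℝ)) ^ 2) / (autocorr f 0 : ℝ) ^ 2

/-- Expectation of `v` over the `2^ℓ` binary sequences of length `ℓ`, each with
equal probability. -/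
def expect (ℓ : ℕ) (v : (ℤ → ℤ) → ℝ) : ℝ :=
  (∑ ε : Fin ℓ → Bool, v (seqOf ℓ ε)) / 2 ^ ℓ

/-- The `p`-th central moment of `v` over binary sequences of length `ℓ`. -/
def centralMoment (p ℓ : ℕ) (v : (ℤ → ℤ) → ℝ) : ℝ :=
  expect ℓ fun f => (v f - expect ℓ v) ^ p

/-! ### Quasi-polynomials in one integer variable -/

/-- `u : ℤ → ℚ` is a quasi-polynomial: it is given at `z` by a rational polynomial depending
periodically on `z`. -/
def IsQP (u : ℤ → ℚ) : Prop :=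
  ∃ m : ℕ, 0 < m ∧ ∃ q : ℤ → Polynomial ℚ, Function.Periodic q (m : ℤ) ∧
    ∀ z : ℤ, u z = (q z).eval (z : ℚ)

lemma IsQP.map₂ {u v : ℤ → ℚ} (hu : IsQP u) (hv : IsQP v) (op : Polynomial ℚ → Polynomial ℚ →
    Polynomial ℚ) (w : ℤ → ℚ)
    (hw : ∀ p q : Polynomial ℚ, ∀ z : ℤ, p.eval (z : ℚ) = u z → q.eval (z : ℚ) = v z →
      w z = (op p q).eval (z : ℚ)) : IsQP w := by
  obtain ⟨m, hm, p, hp, hu⟩ := hu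
  obtain ⟨n, hn, q, hq, hv⟩ := hv
  refine ⟨m * n, Nat.mul_pos hm hn, fun z => op (p z) (q z), ?_, ?_⟩
  · intro z
    have h1 : p (z + ((m * n : ℕ) : ℤ)) = p z := by
      have := hp.nat_mul n z
      rwa [show ((n : ℤ) * m) = ((m * n : ℕ) : ℤ) by push_cast; ring] at this
    have h2 : q (z + ((m * n : ℕ) : ℤ)) = q z := by
      have := hq.nat_mul m z
      rwa [show ((m : ℤ) * n) = ((m * n : ℕ) : ℤ) by push_cast; ring] at this
    simp only [h1, h2]
  · intro z
    exact hw _ _ z (hu z).symm (hv z).symm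

lemma IsQP.add {u v : ℤ → ℚ} (hu : IsQP u) (hv : IsQP v) : IsQP (fun z => u z + v z) :=
  hu.map₂ hv (· + ·) _ (by intro p q z h1 h2; simp [h1, h2])

lemma IsQP.mul {u v : ℤ → ℚ} (hu : IsQP u) (hv : IsQP v) : IsQP (fun z => u z * v z) :=
  hu.map₂ hv (· * ·) _ (by intro p q z h1 h2; simp [h1, h2])

lemma IsQP.poly (p : Polynomial ℚ) : IsQP (fun z => p.eval (z : ℚ)) :=
  ⟨1, one_pos, fun _ => p, fun _ => rfl, fun _ => rfl⟩

lemma IsQP.const (c : ℚ) : IsQP (fun _ => c) := by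
  simpa using IsQP.poly (Polynomial.C c)

lemma IsQP.id : IsQP (fun z => (z : ℚ)) := by
  simpa using IsQP.poly Polynomial.X

lemma IsQP.periodic {u : ℤ → ℚ} {m : ℕ} (hm : 0 < m) (hu : Function.Periodic u (m : ℤ)) :
    IsQP u :=
  ⟨m, hm, fun z => Polynomial.C (u z), fun z => by simp only [hu z], fun z => by simp⟩

lemma IsQP.sum {α : Type*} (s : Finset α) (u : α → ℤ → ℚ) (h : ∀ i ∈ s, IsQP (u i)) :
    IsQP (fun z => ∑ i ∈ s, u i z) := by
  classical
  induction s using Finset.induction_on with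
  | empty => simpa using IsQP.const 0
  | insert a s ha ih =>
    simp only [Finset.sum_insert ha]
    exact (h a (by simp)).add (ih fun i hi => h i (by simp [hi]))

lemma IsQP.pow {u : ℤ → ℚ} (hu : IsQP u) (n : ℕ) : IsQP (fun z => u z ^ n) := by
  induction n with
  | zero => simpa using IsQP.const 1
  | succ n ih => simpa only [pow_succ] using ih.mul hu

lemma IsQP.shift {u : ℤ → ℚ} (hu : IsQP u) (c : ℤ) : IsQP (fun z => u (z + c)) := by
  obtain ⟨m, hm, q, hq, hu⟩ := hu
  refine ⟨m, hm, fun z => (q (z + c)).comp (Polynomial.X + Polynomial.C (c : ℚ)), ?_, ?_⟩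
  · intro z
    have := hq (z + c)
    simp only [show z + c + (m : ℤ) = z + m + c by ring] at this
    simp only [this]
  · intro z
    simp [hu]

lemma IsQP.neg_arg {u : ℤ → ℚ} (hu : IsQP u) : IsQP (fun z => u (-z)) := by
  obtain ⟨m, hm, q, hq, hu⟩ := hu
  refine ⟨m, hm, fun z => (q (-z)).comp (-Polynomial.X), ?_, ?_⟩
  · intro z
    have := hq (-(z + m))
    simp only [show -(z + (m : ℤ)) + m = -z by ring] at this
    simp only [this]
  · intro z
    simp [hu]

/-- The residue indicator `z ↦ [z % m = r]`. -/
lemma IsQP.residue {m : ℕ} (hm : 0 < m) (r : ℤ) :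
    IsQP (fun z => if z % (m : ℤ) = r then 1 else 0) :=
  IsQP.periodic hm (fun z => by simp)

/-- Over `ℚ` every polynomial is a backward difference, by the Bernoulli polynomials. -/
lemma exists_poly_antidiff (Q : Polynomial ℚ) :
    ∃ P : Polynomial ℚ, ∀ x : ℚ, P.eval x - P.eval (x - 1) = Q.eval x := by
  induction Q using Polynomial.induction_on' with
  | add p q hp hq =>
    obtain ⟨P, hP⟩ := hp
    obtain ⟨R, hR⟩ := hq
    refine ⟨P + R, fun x => ?_⟩
    simp only [Polynomial.eval_add, ← hP, ← hR]
    ring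
  | monomial n a =>
    refine ⟨Polynomial.C (a / (n + 1)) *
      (Polynomial.bernoulli (n + 1)).comp (1 + Polynomial.X), fun x => ?_⟩
    have h := Polynomial.bernoulli_eval_one_add (n + 1) x
    have hn : (n : ℚ) + 1 ≠ 0 := by positivity
    simp only [Polynomial.eval_mul, Polynomial.eval_C, Polynomial.eval_comp, Polynomial.eval_add,
      Polynomial.eval_one, Polynomial.eval_X, Polynomial.eval_monomial, add_sub_cancel,
      add_tsub_cancel_right] at *
    rw [h]
    push_cast
    field_simp
    ring

/-- A quasi-polynomial is the backward difference of a quasi-polynomial, on all of `ℤ`. -/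
lemma IsQP.exists_antidiff {u : ℤ → ℚ} (hu : IsQP u) :
    ∃ F : ℤ → ℚ, IsQP F ∧ ∀ z : ℤ, F z - F (z - 1) = u z := by
  obtain ⟨m, hm, q, hq, hu⟩ := hu
  have hm0 : (m : ℤ) ≠ 0 := by positivity
  have hmq : (m : ℚ) ≠ 0 := by positivity
  -- On the class `z = m w + r` the function `u` is the polynomial `Q r` in `w`.
  choose P hP using fun r : ℕ => exists_poly_antidiff
    ((q r).comp (Polynomial.C (m : ℚ) * Polynomial.X + Polynomial.C (r : ℚ)))
  refine ⟨fun z => ∑ r ∈ Finset.range m, (P r).eval (((z - r) / (m : ℤ) : ℤ) : ℚ),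
    IsQP.sum _ _ fun r _ => ?_, fun z => ?_⟩
  · refine ⟨m, hm, fun z => (P r).comp (Polynomial.C (1 / (m : ℚ)) *
      (Polynomial.X - Polynomial.C ((r : ℚ) + ((z - r) % (m : ℤ) : ℤ)))), fun z => ?_, fun z => ?_⟩
    · have : (z + m - r) % (m : ℤ) = (z - r) % (m : ℤ) := by
        rw [show z + (m : ℤ) - r = z - r + m by ring, Int.add_emod_right]
      simp only [this]
    · simp only [Polynomial.eval_comp, Polynomial.eval_mul, Polynomial.eval_C,
        Polynomial.eval_sub, Polynomial.eval_X]
      congr 1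
      have h : ((m : ℚ) * ((z - r) / (m : ℤ) : ℤ) + ((z - r) % (m : ℤ) : ℤ)) = z - r := by
        exact_mod_cast Int.mul_ediv_add_emod (z - r) m
      field_simp
      linarith
  · rw [← Finset.sum_sub_distrib]
    -- Only the residue class of `z` contributes: the other floors do not jump at `z`.
    have hr0 : 0 ≤ z % (m : ℤ) := Int.emod_nonneg _ hm0
    have hr1 : z % (m : ℤ) < m := Int.emod_lt_of_pos _ (by positivity)
    obtain ⟨r₀, hr₀⟩ := Int.eq_ofNat_of_zero_le hr0
    have hdm := Int.mul_ediv_add_emod z m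
    rw [Finset.sum_eq_single r₀]
    · have e1 : (z - r₀) / (m : ℤ) = z / m := by
        rw [show z - r₀ = m * (z / m) by rw [← hr₀]; linarith, Int.mul_ediv_cancel_left _ hm0]
      have e2 : (z - 1 - r₀) / (m : ℤ) = z / m - 1 := by
        rw [show z - 1 - r₀ = (m - 1) + m * (z / m - 1) by rw [← hr₀]; linarith,
          Int.add_mul_ediv_left _ _ hm0, Int.ediv_eq_zero_of_lt (by omega) (by omega)]
        ring
      rw [e1, e2]
      push_cast
      rw [hP, hu]
      have hqz : q z = q r₀ := by
        have := hq.int_mul (z / m) r₀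
        rw [← this]
        congr 1
        simp only [Int.cast_id]
        rw [← hr₀]; linarith
      rw [hqz]
      simp only [Polynomial.eval_comp, Polynomial.eval_mul, Polynomial.eval_C,
        Polynomial.eval_add, Polynomial.eval_X]
      congr 1
      have h : ((m : ℚ) * (z / (m : ℤ) : ℤ) + (z % (m : ℤ) : ℤ)) = z := by exact_mod_cast hdm
      rw [hr₀] at h
      exact_mod_cast h
    · intro r hr hne
      have hrm := Finset.mem_range.mp hr
      have : (z - r) / (m : ℤ) = (z - 1 - r) / (m : ℤ) := by
        have hpos : (0 : ℤ) < m := by positivity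
        have h1 := Int.mul_ediv_add_emod (z - 1 - r) m
        have h2 := Int.emod_nonneg (z - 1 - r) hm0
        have h3 := Int.emod_lt_of_pos (z - 1 - r) hpos
        by_cases h4 : (z - 1 - r) % (m : ℤ) + 1 < m
        · rw [show z - r = ((z - 1 - r) % (m : ℤ) + 1) + m * ((z - 1 - r) / m) by linarith,
            Int.add_mul_ediv_left _ _ hm0, Int.ediv_eq_zero_of_lt (by omega) h4, zero_add]
        · exfalso
          apply hne
          have h5 : (z - r) % (m : ℤ) = 0 := by
            rw [show z - r = m * ((z - 1 - r) / m + 1) by linarith]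
            simp
          have h6 : z % (m : ℤ) = r % m := Int.emod_eq_emod_iff_emod_sub_eq_zero.mpr h5
          have h7 : (r : ℤ) % m = r := Int.emod_eq_of_lt (by positivity) (by exact_mod_cast hrm)
          omega
      rw [this, sub_self]
    · intro h
      exact absurd (Finset.mem_range.mpr (by omega)) h

lemma sum_Ioo_antidiff {u F : ℤ → ℚ} (h : ∀ z : ℤ, F z - F (z - 1) = u z) {a b : ℤ}
    (hab : a < b) : ∑ y ∈ Finset.Ioo a b, u y = F (b - 1) - F a := by
  obtain ⟨n, rfl⟩ : ∃ n : ℕ, b = a + 1 + n := ⟨(b - a - 1).toNat, by omega⟩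
  clear hab
  induction n with
  | zero =>
    have : Finset.Ioo a (a + 1 + ((0 : ℕ) : ℤ)) = ∅ := by
      ext
      simp
    rw [this]
    simp
  | succ n ih =>
    have : Finset.Ioo a (a + 1 + ((n + 1 : ℕ) : ℤ)) =
        insert (a + 1 + (n : ℤ)) (Finset.Ioo a (a + 1 + (n : ℤ))) := by
      ext; simp; omega
    rw [this, Finset.sum_insert (by simp), ih, ← h]
    push_cast
    rw [show a + 1 + ((n : ℤ) + 1) - 1 = a + 1 + n by ring]
    ring

/-! ### Piecewise quasi-polynomials with homogeneous chambers -/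

/-- The functions on `A` that generate the ring `pqp A`: additive maps to `ℚ`, periodic functions,
and indicators of open homogeneous half-spaces. -/
inductive PQPGen (A : Type*) [AddCommGroup A] : (A → ℚ) → Prop
  | lin (L : A →+ ℚ) : PQPGen A (fun x => L x)
  | periodic (p : A → ℚ) (M : ℕ) (hM : 0 < M) (hp : ∀ x v, p (x + M • v) = p x) : PQPGen A p
  | half (L : A →+ ℚ) : PQPGen A (fun x => if 0 < L x then 1 else 0)

/-- The ring of piecewise quasi-polynomial functions on the lattice `A` whose chambers are cut out
by homogeneous linear inequalities. -/
def pqp (A : Type*) [AddCommGroup A] : Subalgebra ℚ (A → ℚ) :=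
  Algebra.adjoin ℚ {f | PQPGen A f}

section Ring

variable {A B : Type*} [AddCommGroup A] [AddCommGroup B]

lemma pqp_lin (L : A →+ ℚ) : (fun x => L x) ∈ pqp A :=
  Algebra.subset_adjoin (PQPGen.lin L)

lemma pqp_periodic {p : A → ℚ} {M : ℕ} (hM : 0 < M) (hp : ∀ x v, p (x + M • v) = p x) :
    p ∈ pqp A :=
  Algebra.subset_adjoin (PQPGen.periodic p M hM hp)

lemma pqp_half (L : A →+ ℚ) : (fun x => if 0 < L x then (1 : ℚ) else 0) ∈ pqp A :=
  Algebra.subset_adjoin (PQPGen.half L)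

lemma pqp_const (c : ℚ) : (fun _ => c) ∈ pqp A := (pqp A).algebraMap_mem c

lemma pqp_lt (L L' : A →+ ℚ) : (fun x => if L x < L' x then (1 : ℚ) else 0) ∈ pqp A := by
  simpa using pqp_half (L' - L)

lemma pqp_add {f g : A → ℚ} (hf : f ∈ pqp A) (hg : g ∈ pqp A) :
    (fun x => f x + g x) ∈ pqp A := (pqp A).add_mem hf hg

lemma pqp_sub {f g : A → ℚ} (hf : f ∈ pqp A) (hg : g ∈ pqp A) :
    (fun x => f x - g x) ∈ pqp A := (pqp A).sub_mem hf hg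

lemma pqp_mul {f g : A → ℚ} (hf : f ∈ pqp A) (hg : g ∈ pqp A) :
    (fun x => f x * g x) ∈ pqp A := (pqp A).mul_mem hf hg

lemma pqp_sum {α : Type*} (s : Finset α) (f : α → A → ℚ) (h : ∀ i ∈ s, f i ∈ pqp A) :
    (fun x => ∑ i ∈ s, f i x) ∈ pqp A := by
  have := (pqp A).sum_mem h
  convert this using 1
  ext x
  simp

lemma pqp_prod {α : Type*} (s : Finset α) (f : α → A → ℚ) (h : ∀ i ∈ s, f i ∈ pqp A) :
    (fun x => ∏ i ∈ s, f i x) ∈ pqp A := by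
  have := (pqp A).prod_mem h
  convert this using 1
  ext x
  simp

lemma pqp_eq (L L' : A →+ ℚ) : (fun x => if L x = L' x then (1 : ℚ) else 0) ∈ pqp A := by
  have := pqp_sub (pqp_sub (pqp_const 1) (pqp_lt L L')) (pqp_lt L' L)
  convert this using 1
  ext x
  rcases lt_trichotomy (L x) (L' x) with h | h | h
  · simp [h, h.ne, h.le]
  · simp [h]
  · simp [h, h.ne', h.le]

lemma pqp_poly {f : A → ℚ} (hf : f ∈ pqp A) (p : Polynomial ℚ) :
    (fun x => p.eval (f x)) ∈ pqp A := by
  simp only [Polynomial.eval_eq_sum_range]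
  exact pqp_sum _ _ fun i _ => pqp_mul (pqp_const _) ((pqp A).pow_mem hf i)

lemma pqp_comp {f : A → ℚ} (hf : f ∈ pqp A) (φ : B →+ A) : (fun x => f (φ x)) ∈ pqp B := by
  induction hf using Algebra.adjoin_induction with
  | mem f hf =>
    cases hf with
    | lin L => exact pqp_lin (L.comp φ)
    | periodic _ M hM hp => exact pqp_periodic hM (fun x v => by simp [hp])
    | half L => exact pqp_half (L.comp φ)
  | algebraMap r => exact pqp_const r
  | add f g _ _ hf hg => exact pqp_add hf hg
  | mul f g _ _ hf hg => exact pqp_mul hf hg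

/-- A rational linear form on a finitely generated group has bounded denominators. -/
lemma exists_denom [Module.Finite ℤ A] (L : A →+ ℚ) :
    ∃ D : ℕ, 0 < D ∧ ∀ x, ∃ z : ℤ, (D : ℚ) * L x = z := by
  obtain ⟨S, hS⟩ := Module.finite_def.mp (inferInstance : Module.Finite ℤ A)
  refine ⟨∏ s ∈ S, (L s).den, Finset.prod_pos fun s _ => (L s).den_pos, fun x => ?_⟩
  have hx : x ∈ Submodule.span ℤ (S : Set A) := by rw [hS]; trivial
  induction hx using Submodule.span_induction with
  | mem s hs =>
    obtain ⟨c, hc⟩ := Finset.dvd_prod_of_mem (fun s => (L s).den) hs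
    refine ⟨c * (L s).num, ?_⟩
    rw [hc]
    have := Rat.den_mul_eq_num (L s)
    push_cast
    rw [← this]
    ring
  | zero => exact ⟨0, by simp⟩
  | add x y _ _ hx hy =>
    obtain ⟨a, ha⟩ := hx
    obtain ⟨b, hb⟩ := hy
    exact ⟨a + b, by rw [map_add, mul_add, ha, hb]; push_cast; rfl⟩
  | smul n x _ hx =>
    obtain ⟨a, ha⟩ := hx
    refine ⟨n * a, ?_⟩
    rw [map_zsmul, zsmul_eq_mul, mul_left_comm, ha]
    push_cast
    rfl

/-- Substituting the floor of a rational linear form into a quasi-polynomial. -/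
lemma pqp_floor [Module.Finite ℤ A] {u : ℤ → ℚ} (hu : IsQP u) (L : A →+ ℚ) :
    (fun x => u ⌊L x⌋) ∈ pqp A := by
  obtain ⟨D, hD, hL⟩ := exists_denom L
  obtain ⟨m, hm, q, hq, hu⟩ := hu
  have hfloor : (fun x => ((⌊L x⌋ : ℤ) : ℚ)) ∈ pqp A := by
    have h : (fun x => Int.fract (L x)) ∈ pqp A := by
      refine pqp_periodic hD fun x v => ?_
      obtain ⟨z, hz⟩ := hL v
      rw [map_add, map_nsmul, nsmul_eq_mul, hz, Int.fract_add_intCast]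
    have := pqp_sub (pqp_lin L) h
    simpa using this
  have hres : ∀ r : ℕ, (fun x => if ⌊L x⌋ % (m : ℤ) = r then (1 : ℚ) else 0) ∈ pqp A := by
    intro r
    refine pqp_periodic (M := D * m) (Nat.mul_pos hD hm) fun x v => ?_
    obtain ⟨z, hz⟩ := hL v
    have : L (x + (D * m) • v) = L x + ((m * z : ℤ) : ℚ) := by
      rw [map_add, map_nsmul, nsmul_eq_mul]
      push_cast
      rw [← hz]
      ring
    rw [this, Int.floor_add_intCast, Int.add_mul_emod_self_left]
  have := pqp_sum (Finset.range m) _ fun r _ => pqp_mul (hres r) (pqp_poly hfloor (q r))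
  convert this using 1
  ext x
  have hr0 : 0 ≤ ⌊L x⌋ % (m : ℤ) := Int.emod_nonneg _ (by positivity)
  have hr1 : ⌊L x⌋ % (m : ℤ) < m := Int.emod_lt_of_pos _ (by positivity)
  obtain ⟨r₀, hr₀⟩ := Int.eq_ofNat_of_zero_le hr0
  rw [Finset.sum_eq_single r₀]
  · rw [if_pos hr₀, one_mul, hu]
    congr 1
    have := hq.int_mul (⌊L x⌋ / m) r₀
    rw [← this]
    congr 1
    have := Int.mul_ediv_add_emod ⌊L x⌋ m
    simp only [Int.cast_id]
    linarith
  · intro r _ hne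
    rw [if_neg, zero_mul]
    intro h
    apply hne
    omega
  · intro h
    exact absurd (Finset.mem_range.mpr (by omega)) h

/-- Functions on `A × ℤ` supported, for fixed `x : A`, on a bounded interval of `ℤ` cut out by
linear forms in `x`, and quasi-polynomial in the last variable there; and their combinations. -/
def intervalSpan (A : Type*) [AddCommGroup A] : Submodule ℚ (A × ℤ → ℚ) :=
  Submodule.span ℚ {g | ∃ c ∈ pqp A, ∃ u : ℤ → ℚ, IsQP u ∧ ∃ α β : A →+ ℚ,
    g = fun p => c p.1 * u p.2 * if α p.1 < p.2 ∧ (p.2 : ℚ) < β p.1 then 1 else 0}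

lemma mem_intervalSpan {c : A → ℚ} (hc : c ∈ pqp A) {u : ℤ → ℚ} (hu : IsQP u) (α β : A →+ ℚ) :
    (fun p : A × ℤ => c p.1 * u p.2 * if α p.1 < p.2 ∧ (p.2 : ℚ) < β p.1 then 1 else 0) ∈
      intervalSpan A :=
  Submodule.subset_span ⟨c, hc, u, hu, α, β, rfl⟩

lemma addHom_prod_int (L : A × ℤ →+ ℚ) (p : A × ℤ) :
    L p = L.comp (AddMonoidHom.inl A ℤ) p.1 + p.2 * L (0, 1) := by
  obtain ⟨x, y⟩ := p
  have : ((x, y) : A × ℤ) = (x, 0) + y • (0, 1) := by simp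
  conv_lhs => rw [this]
  rw [map_add, map_zsmul, zsmul_eq_mul]
  rfl

/-- Multiplication by a generator preserves `intervalSpan`. The essential case is a half-space,
where the maximum of two lower bounds (or the minimum of two upper bounds) is resolved by comparing
them, which is again a homogeneous condition on `x`. -/
lemma gen_mul_mem {h : A × ℤ → ℚ} (hh : PQPGen (A × ℤ) h) {s : A × ℤ → ℚ}
    (hs : s ∈ intervalSpan A) : h * s ∈ intervalSpan A := by
  induction hs using Submodule.span_induction with
  | zero => simp
  | add f g _ _ hf hg => rw [mul_add]; exact Submodule.add_mem _ hf hg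
  | smul a f _ hf => rw [mul_smul_comm]; exact Submodule.smul_mem _ _ hf
  | mem f hf =>
    obtain ⟨c, hc, u, hu, α, β, rfl⟩ := hf
    cases hh with
    | lin L =>
      have h1 := mem_intervalSpan (pqp_mul (pqp_lin (L.comp (AddMonoidHom.inl A ℤ))) hc) hu α β
      have h2 := mem_intervalSpan hc ((IsQP.id.mul (IsQP.const (L (0, 1)))).mul hu) α β
      convert Submodule.add_mem _ h1 h2 using 1
      ext p
      simp only [Pi.mul_apply, Pi.add_apply]
      rw [addHom_prod_int L p]
      ring
    | periodic _ M hM hp =>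
      have h1 : ∀ r ∈ Finset.range M, (fun p : A × ℤ => (h (p.1, (r : ℤ)) * c p.1) *
          ((if p.2 % (M : ℤ) = r then 1 else 0) * u p.2) *
            if α p.1 < p.2 ∧ (p.2 : ℚ) < β p.1 then 1 else 0) ∈ intervalSpan A := by
        intro r _
        have hper : (fun x => h (x, (r : ℤ))) ∈ pqp A := by
          refine pqp_periodic hM fun x v => ?_
          have := hp (x, (r : ℤ)) (v, 0)
          simpa using this
        exact mem_intervalSpan (c := fun x => h (x, (r : ℤ)) * c x) (pqp_mul hper hc)
          ((IsQP.residue hM r).mul hu) α β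
      convert Submodule.sum_mem _ h1 using 1
      ext ⟨x, y⟩
      simp only [Pi.mul_apply, Finset.sum_apply]
      have hr0 : 0 ≤ y % (M : ℤ) := Int.emod_nonneg _ (by positivity)
      have hr1 : y % (M : ℤ) < M := Int.emod_lt_of_pos _ (by positivity)
      obtain ⟨r₀, hr₀⟩ := Int.eq_ofNat_of_zero_le hr0
      rw [Finset.sum_eq_single r₀]
      · have : h (x, y) = h (x, (r₀ : ℤ)) := by
          have := hp (x, (r₀ : ℤ)) (0, y / M)
          rw [← this]
          congr 1
          have h3 := Int.mul_ediv_add_emod y M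
          ext
          · simp
          · simp
            linarith
        rw [if_pos hr₀, this]
        ring
      · intro r _ hne
        rw [if_neg (by intro h; apply hne; omega)]
        ring
      · intro h
        exact absurd (Finset.mem_range.mpr (by omega)) h
    | half L =>
      set L₀ := L.comp (AddMonoidHom.inl A ℤ) with hL₀
      set a := L (0, 1) with ha
      have hL : ∀ p : A × ℤ, L p = L₀ p.1 + p.2 * a := addHom_prod_int L
      set γ : A →+ ℚ := (AddMonoidHom.mulLeft (-1 / a)).comp L₀ with hγ
      have hγx : ∀ x, γ x = -1 / a * L₀ x := fun x => rfl
      rcases lt_trichotomy a 0 with ha0 | ha0 | ha0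
      · have hiff : ∀ p : A × ℤ, 0 < L p ↔ (p.2 : ℚ) < γ p.1 := by
          intro p
          rw [hL, hγx, show -1 / a * L₀ p.1 = L₀ p.1 / (-a) by field_simp,
            lt_div_iff₀ (by linarith)]
          constructor <;> intro <;> linarith
        have h1 := mem_intervalSpan (pqp_mul (pqp_lt γ β) hc) hu α γ
        have h2 := mem_intervalSpan
          (pqp_mul (pqp_sub (pqp_const 1) (pqp_lt γ β)) hc) hu α β
        convert Submodule.add_mem _ h1 h2 using 1
        ext p
        simp only [Pi.mul_apply, Pi.add_apply, hiff]
        by_cases e1 : γ p.1 < β p.1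
        · by_cases e2 : (p.2 : ℚ) < γ p.1
          · simp [e1, e2, e2.trans e1]
          · simp [e1, e2]
        · by_cases e2 : (p.2 : ℚ) < β p.1
          · simp [e1, e2, e2.trans_le (not_lt.mp e1)]
          · simp [e1, e2]
      · have h1 := mem_intervalSpan (pqp_mul (pqp_half L₀) hc) hu α β
        convert h1 using 1
        ext p
        simp only [Pi.mul_apply, hL, ha0, mul_zero, add_zero]
        ring
      · have hiff : ∀ p : A × ℤ, 0 < L p ↔ γ p.1 < (p.2 : ℚ) := by
          intro p
          rw [hL, hγx, show -1 / a * L₀ p.1 = (-L₀ p.1) / a by field_simp,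
            div_lt_iff₀ ha0]
          constructor <;> intro <;> linarith
        have h1 := mem_intervalSpan (pqp_mul (pqp_lt α γ) hc) hu γ β
        have h2 := mem_intervalSpan
          (pqp_mul (pqp_sub (pqp_const 1) (pqp_lt α γ)) hc) hu α β
        convert Submodule.add_mem _ h1 h2 using 1
        ext p
        simp only [Pi.mul_apply, Pi.add_apply, hiff]
        by_cases e1 : α p.1 < γ p.1
        · by_cases e2 : γ p.1 < (p.2 : ℚ)
          · simp [e1, e2, e1.trans e2]
          · simp [e1, e2]
        · by_cases e2 : α p.1 < (p.2 : ℚ)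
          · simp [e1, e2, (not_lt.mp e1).trans_lt e2]
          · simp [e1, e2]

lemma pqp_mul_mem_intervalSpan {h : A × ℤ → ℚ} (hh : h ∈ pqp (A × ℤ)) :
    ∀ s ∈ intervalSpan A, h * s ∈ intervalSpan A := by
  induction hh using Algebra.adjoin_induction with
  | mem f hf => exact fun s hs => gen_mul_mem hf hs
  | algebraMap r =>
    intro s hs
    rw [← Algebra.smul_def]
    exact Submodule.smul_mem _ _ hs
  | add f g _ _ hf hg =>
    intro s hs
    rw [add_mul]
    exact Submodule.add_mem _ (hf s hs) (hg s hs)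
  | mul f g _ _ hf hg =>
    intro s hs
    rw [mul_assoc]
    exact hf _ (hg s hs)

/-- Summing out the last variable of an element of `intervalSpan A` gives an element of `pqp A`.
Since an interval with `α < β` satisfies `⌊α⌋ < ⌈β⌉`, the telescoped sum is exact on all of the
chamber `α < β`, and the sum is empty off it. -/
lemma intervalSpan_hasSum [Module.Finite ℤ A] {s : A × ℤ → ℚ} (hs : s ∈ intervalSpan A) :
    ∃ G ∈ pqp A, ∀ x, HasSum (fun y : ℤ => s (x, y)) (G x) := by
  induction hs using Submodule.span_induction with
  | zero => exact ⟨_, pqp_const 0, fun x => by simp⟩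
  | add f g _ _ hf hg =>
    obtain ⟨F, hF, hf⟩ := hf
    obtain ⟨G, hG, hg⟩ := hg
    exact ⟨_, pqp_add hF hG, fun x => (hf x).add (hg x)⟩
  | smul a f _ hf =>
    obtain ⟨F, hF, hf⟩ := hf
    exact ⟨_, pqp_mul (pqp_const a) hF, fun x => (hf x).mul_left a⟩
  | mem f hf =>
    obtain ⟨c, hc, u, hu, α, β, rfl⟩ := hf
    obtain ⟨F, hF, hFu⟩ := hu.exists_antidiff
    -- `⌈β⌉ - 1 = -⌊-β⌋ - 1`
    have hβ := pqp_floor (hF.shift (-1)).neg_arg (-β)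
    refine ⟨_, pqp_mul hc (pqp_mul (pqp_lt α β) (pqp_sub hβ (pqp_floor hF α))), fun x => ?_⟩
    have h1 := hasSum_sum_of_ne_finset_zero (L := SummationFilter.unconditional ℤ)
      (f := fun y : ℤ => c x * u y * if α x < y ∧ (y : ℚ) < β x then (1 : ℚ) else 0)
      (s := Finset.Ioo ⌊α x⌋ ⌈β x⌉) (by
        intro y hy
        rw [Finset.mem_Ioo, Int.floor_lt, Int.lt_ceil] at hy
        rw [if_neg hy, mul_zero])
    convert h1 using 1
    have h2 : ∑ y ∈ Finset.Ioo ⌊α x⌋ ⌈β x⌉, (c x * u y *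
        if α x < y ∧ (y : ℚ) < β x then (1 : ℚ) else 0) =
        c x * ∑ y ∈ Finset.Ioo ⌊α x⌋ ⌈β x⌉, u y := by
      rw [Finset.mul_sum]
      refine Finset.sum_congr rfl fun y hy => ?_
      rw [Finset.mem_Ioo, Int.floor_lt, Int.lt_ceil] at hy
      rw [if_pos hy, mul_one]
    rw [h2]
    congr 1
    by_cases hab : α x < β x
    · have hlt : ⌊α x⌋ < ⌈β x⌉ := by
        have h3 : ((⌊α x⌋ : ℤ) : ℚ) < (⌈β x⌉ : ℤ) :=
          lt_of_le_of_lt (Int.floor_le _) (lt_of_lt_of_le hab (Int.le_ceil _))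
        exact_mod_cast h3
      rw [sum_Ioo_antidiff hFu hlt, if_pos hab, one_mul]
      simp [Int.floor_neg, sub_eq_add_neg]
    · rw [if_neg hab, zero_mul, Finset.sum_eq_zero]
      intro y hy
      rw [Finset.mem_Ioo, Int.floor_lt, Int.lt_ceil] at hy
      exact absurd (hy.1.trans hy.2) hab

/-- The ring `pqp` is closed under summation of the last variable over `0 < y < τ x`. -/
lemma pqp_sum_Ioo [Module.Finite ℤ A] {g : A × ℤ → ℚ} (hg : g ∈ pqp (A × ℤ)) (τ : A →+ ℤ) :
    (fun x => ∑ y ∈ Finset.Ioo 0 (τ x), g (x, y)) ∈ pqp A := by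
  have h1 := mem_intervalSpan (A := A) (pqp_const 1) (IsQP.const 1) 0
    ((Int.castAddHom ℚ).comp τ)
  obtain ⟨G, hG, hsum⟩ := intervalSpan_hasSum (pqp_mul_mem_intervalSpan hg _ h1)
  convert hG using 1
  ext x
  refine HasSum.unique ?_ (hsum x)
  have h2 := hasSum_sum_of_ne_finset_zero (L := SummationFilter.unconditional ℤ)
    (f := fun y : ℤ => g (x, y) * (1 * 1 * if 0 < (y : ℚ) ∧ (y : ℚ) < (τ x : ℤ) then 1 else 0))
    (s := Finset.Ioo 0 (τ x)) (by
      intro y hy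
      rw [Finset.mem_Ioo] at hy
      rw [if_neg (by exact_mod_cast hy)]
      ring)
  have h3 : ∑ y ∈ Finset.Ioo 0 (τ x), g (x, y) = ∑ y ∈ Finset.Ioo 0 (τ x),
      g (x, y) * (1 * 1 * if 0 < (y : ℚ) ∧ (y : ℚ) < (τ x : ℤ) then 1 else 0) := by
    refine Finset.sum_congr rfl fun y hy => ?_
    rw [Finset.mem_Ioo] at hy
    rw [if_pos (by exact_mod_cast hy)]
    ring
  rw [h3]
  exact h2

end Ring

/-- On the positive ray an element of `pqp ℤ` is a quasi-polynomial, because a homogeneous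
half-space of `ℤ` contains all of the ray or none of it. -/
lemma pqp_int {f : ℤ → ℚ} (hf : f ∈ pqp ℤ) : ∃ u, IsQP u ∧ ∀ t : ℤ, 0 < t → f t = u t := by
  have hlin : ∀ (L : ℤ →+ ℚ) (t : ℤ), L t = t * L 1 := by
    intro L t
    have := map_zsmul L t 1
    simpa using this
  induction hf using Algebra.adjoin_induction with
  | mem f hf =>
    cases hf with
    | lin L => exact ⟨_, IsQP.id.mul (IsQP.const (L 1)), fun t _ => hlin L t⟩
    | periodic _ M hM hp =>
      refine ⟨f, IsQP.periodic hM fun z => ?_, fun t _ => rfl⟩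
      simpa using hp z 1
    | half L =>
      refine ⟨_, IsQP.const (if 0 < L 1 then 1 else 0), fun t ht => ?_⟩
      have : (0 : ℚ) < t := by exact_mod_cast ht
      simp only [hlin L t, mul_pos_iff_of_pos_left this]
  | algebraMap r => exact ⟨_, IsQP.const r, fun t _ => rfl⟩
  | add f g _ _ hf hg =>
    obtain ⟨u, hu, hfu⟩ := hf
    obtain ⟨v, hv, hgv⟩ := hg
    exact ⟨_, hu.add hv, fun t ht => by rw [Pi.add_apply, hfu t ht, hgv t ht]⟩
  | mul f g _ _ hf hg =>
    obtain ⟨u, hu, hfu⟩ := hf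
    obtain ⟨v, hv, hgv⟩ := hg
    exact ⟨_, hu.mul hv, fun t ht => by rw [Pi.mul_apply, hfu t ht, hgv t ht]⟩

/-- Summing out the variables in `s` over the open interval `(0, t)`, the other ones being kept. -/
lemma pqp_sum_cube {ι : Type*} [Fintype ι] [DecidableEq ι] {F : (ι → ℤ) → ℚ}
    (hF : F ∈ pqp (ι → ℤ)) (s : Finset ι) :
    (fun p : ℤ × (ι → ℤ) => ∑ v ∈ Fintype.piFinset
      (fun i => if i ∈ s then Finset.Ioo 0 p.1 else {p.2 i}), F v) ∈ pqp (ℤ × (ι → ℤ)) := by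
  induction s using Finset.induction_on with
  | empty =>
    convert pqp_comp hF (AddMonoidHom.snd ℤ (ι → ℤ)) using 1
    ext p
    simp [Fintype.piFinset_singleton]
  | insert a s ha ih =>
    let φ : (ℤ × (ι → ℤ)) × ℤ →+ ℤ × (ι → ℤ) :=
      { toFun := fun p => (p.1.1, Function.update p.1.2 a p.2)
        map_zero' := by ext <;> simp
        map_add' := by
          intro p q
          ext i
          · simp
          · by_cases h : i = a
            · subst h; simp
            · simp [h] }
    convert pqp_sum_Ioo (pqp_comp ih φ) (AddMonoidHom.fst ℤ (ι → ℤ)) using 1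
    ext p
    rw [Finset.sum_sigma']
    symm
    refine Finset.sum_bij' (fun w _ => w.2) (fun v _ => ⟨v a, v⟩) ?_ ?_ ?_ ?_ ?_
    · rintro ⟨y, v⟩ h
      simp only [Finset.mem_sigma, Fintype.mem_piFinset] at h ⊢
      intro i
      have h2 := h.2 i
      by_cases hi : i = a
      · subst hi
        simp [φ, ha] at h2 ⊢
        rw [h2]
        simpa using h.1
      · by_cases his : i ∈ s
        · simpa [φ, hi, his] using h2
        · simpa [φ, hi, his] using h2
    · intro v h
      simp only [Finset.mem_sigma, Fintype.mem_piFinset] at h ⊢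
      refine ⟨by simpa using h a, fun i => ?_⟩
      have h2 := h i
      by_cases hi : i = a
      · subst hi
        simp [φ, ha]
      · by_cases his : i ∈ s
        · simpa [φ, hi, his] using h2
        · simpa [φ, hi, his] using h2
    · rintro ⟨y, v⟩ h
      simp only [Finset.mem_sigma, Fintype.mem_piFinset] at h
      have h2 := h.2 a
      simp [φ, ha] at h2
      simp [h2]
    · intro v _
      rfl
    · intro w _
      rfl

/-- The weighted count of the integer points of an open cube `(0, t)^ι` is a quasi-polynomial in
`t` for all positive `t`, without exceptions. -/
lemma exists_qp_sum_cube {ι : Type*} [Fintype ι] [DecidableEq ι] {F : (ι → ℤ) → ℚ}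
    (hF : F ∈ pqp (ι → ℤ)) : ∃ u, IsQP u ∧ ∀ t : ℤ, 0 < t →
      ∑ v ∈ Fintype.piFinset (fun _ : ι => Finset.Ioo 0 t), F v = u t := by
  have := pqp_comp (pqp_sum_cube hF Finset.univ) (AddMonoidHom.inl ℤ (ι → ℤ))
  simpa using pqp_int this

/-! ### Moments of `ssac` as counts of solutions of linear equations -/

/-- The sign attached to a Boolean, as in `seqOf`. -/
def sgn (b : Bool) : ℤ := if b then 1 else -1

lemma seqOf_eq_sum (ℓ : ℕ) (ε : Fin ℓ → Bool) (j : ℤ) :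
    seqOf ℓ ε j = ∑ a : Fin ℓ, if j = (a : ℕ) then sgn (ε a) else 0 := by
  unfold seqOf
  split_ifs with h h'
  · rw [Finset.sum_eq_single ⟨j.toNat, by omega⟩]
    · simp [h', sgn]
      omega
    · intro b _ hb
      rw [if_neg]
      intro hj
      apply hb
      ext
      simp [hj]
    · simp
  · rw [Finset.sum_eq_single ⟨j.toNat, by omega⟩]
    · simp [h', sgn]
      omega
    · intro b _ hb
      rw [if_neg]
      intro hj
      apply hb
      ext
      simp [hj]
    · simp
  · symm
    apply Finset.sum_eq_zero
    intro a _
    rw [if_neg]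
    have := a.2
    omega

lemma autocorr_seqOf (ℓ : ℕ) (ε : Fin ℓ → Bool) (s : ℤ) :
    autocorr (seqOf ℓ ε) s = ∑ a : Fin ℓ, ∑ b : Fin ℓ,
      if s = (a : ℤ) - (b : ℤ) then sgn (ε a) * sgn (ε b) else 0 := by
  unfold autocorr
  rw [finsum_eq_sum_of_support_subset (s := Finset.Ico (0 : ℤ) ℓ)]
  · simp only [seqOf_eq_sum, Finset.sum_mul_sum]
    rw [Finset.sum_comm]
    refine Finset.sum_congr rfl fun a _ => ?_
    rw [Finset.sum_comm]
    refine Finset.sum_congr rfl fun b _ => ?_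
    rw [Finset.sum_eq_single (b : ℤ)]
    · by_cases h : s = (a : ℤ) - b
      · rw [if_pos h, if_pos (by omega), if_pos rfl]
      · rw [if_neg h, if_neg (by omega), zero_mul]
    · intro j _ hj
      simp [hj]
    · intro h
      exact absurd (Finset.mem_Ico.mpr ⟨by omega, by have := b.2; omega⟩) h
  · intro j hj
    by_contra hj'
    apply hj
    have : seqOf ℓ ε j = 0 := by
      unfold seqOf
      rw [dif_neg]
      simpa using hj'
    simp [this]

/-- `ssac` is the sum of `f a f b f c f d` over the solutions of `a - b = c - d`. -/
lemma ssac_seqOf (ℓ : ℕ) (ε : Fin ℓ → Bool) :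
    ssac (seqOf ℓ ε) = ((∑ x : Fin 4 → Fin ℓ,
      (if ((x 0 : ℕ) : ℤ) - (x 1 : ℕ) = (x 2 : ℕ) - (x 3 : ℕ) then 1 else 0) *
        ∏ i, (sgn (ε (x i)) : ℚ) : ℚ) : ℝ) := by
  have key : ssac (seqOf ℓ ε) = ((∑ a : Fin ℓ, ∑ b : Fin ℓ, ∑ c : Fin ℓ, ∑ d : Fin ℓ,
      (if ((a : ℕ) : ℤ) - (b : ℕ) = (c : ℕ) - (d : ℕ) then 1 else 0) *
        ((sgn (ε a) : ℚ) * sgn (ε b) * (sgn (ε c) * sgn (ε d))) : ℚ) : ℝ) := by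
    unfold ssac
    rw [finsum_eq_sum_of_support_subset (s := Finset.Ioo (-(ℓ : ℤ)) ℓ)]
    · have : ∀ s : ℤ, ((autocorr (seqOf ℓ ε) s : ℤ) : ℝ) ^ 2 =
          (((autocorr (seqOf ℓ ε) s : ℤ) : ℚ) ^ 2 : ℚ) := by intro s; push_cast; rfl
      simp only [this]
      rw [← Rat.cast_sum]
      congr 1
      simp only [autocorr_seqOf, sq, Int.cast_sum, Finset.sum_mul, Finset.mul_sum]
      rw [Finset.sum_comm]
      refine Finset.sum_congr rfl fun a _ => ?_
      rw [Finset.sum_comm]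
      refine Finset.sum_congr rfl fun b _ => ?_
      rw [Finset.sum_comm]
      refine Finset.sum_congr rfl fun c _ => ?_
      rw [Finset.sum_comm]
      refine Finset.sum_congr rfl fun d _ => ?_
      rw [Finset.sum_eq_single ((a : ℤ) - b)]
      · by_cases h : (a : ℤ) - b = c - d
        · simp [h, mul_comm]
        · simp [h]
      · intro s _ hs
        simp [hs]
      · intro h
        exact absurd (Finset.mem_Ioo.mpr ⟨by have := a.2; have := b.2; omega,
          by have := a.2; have := b.2; omega⟩) h
    · intro s hs
      by_contra hs'
      apply hs
      have : autocorr (seqOf ℓ ε) s = 0 := by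
        rw [autocorr_seqOf]
        refine Finset.sum_eq_zero fun a _ => Finset.sum_eq_zero fun b _ => ?_
        rw [if_neg]
        rintro rfl
        apply hs'
        have := a.2
        have := b.2
        simp
        omega
      simp [this]
  rw [key]
  congr 1
  simp only [← Fintype.sum_prod_type']
  refine Fintype.sum_equiv ⟨fun p => ![p.1, p.2.1, p.2.2.1, p.2.2.2],
    fun x => (x 0, x 1, x 2, x 3), fun p => rfl, fun x => ?_⟩ _ _ fun p => ?_
  · ext i
    fin_cases i <;> rfl
  · change _ = (if ((p.1 : ℕ) : ℤ) - (p.2.1 : ℕ) = (p.2.2.1 : ℕ) - (p.2.2.2 : ℕ)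
      then (1 : ℚ) else 0) *
        ∏ i, (sgn (ε ((![p.1, p.2.1, p.2.2.1, p.2.2.2] : Fin 4 → Fin ℓ) i)) : ℚ)
    rw [Fin.prod_univ_four]
    change _ = _ * ((sgn (ε p.1) : ℚ) * sgn (ε p.2.1) * sgn (ε p.2.2.1) * sgn (ε p.2.2.2))
    ring

/-- The weight of a tuple `y`: `1` if every value of `y` is taken an even number of times and `0`
otherwise. -/
def evenWeight {ι κ : Type*} [Fintype ι] [DecidableEq κ] (y : ι → κ) : ℚ :=
  ∏ i, (1 + ∏ i', (if y i' = y i then -1 else 1)) / 2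

/-- Expectation of a monomial in independent uniform signs. -/
lemma sum_prod_sgn {ι : Type*} [Fintype ι] (ℓ : ℕ) (y : ι → Fin ℓ) :
    ∑ ε : Fin ℓ → Bool, ∏ i, (sgn (ε (y i)) : ℚ) = 2 ^ ℓ * evenWeight y := by
  classical
  -- `n j` is the multiplicity of the value `j`.
  set n : Fin ℓ → ℕ := fun j => (Finset.univ.filter fun i => y i = j).card with hn
  have h1 : ∀ ε : Fin ℓ → Bool, ∏ i, (sgn (ε (y i)) : ℚ) = ∏ j, (sgn (ε j) : ℚ) ^ n j := by
    intro ε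
    rw [← Finset.prod_fiberwise Finset.univ y]
    refine Finset.prod_congr rfl fun j _ => ?_
    rw [Finset.prod_congr rfl (g := fun _ => (sgn (ε j) : ℚ)), Finset.prod_const]
    intro i hi
    rw [(Finset.mem_filter.mp hi).2]
  have h2 : ∀ j, ∏ i', (if y i' = j then (-1 : ℚ) else 1) = (-1) ^ n j := by
    intro j
    rw [Finset.prod_ite, Finset.prod_const, Finset.prod_const_one, mul_one]
  simp only [h1, evenWeight, h2]
  rw [← Fintype.prod_sum (fun j (b : Bool) => (sgn b : ℚ) ^ n j)]
  have h3 : ∀ j, ∑ b : Bool, (sgn b : ℚ) ^ n j = 2 * ((1 + (-1) ^ n j) / 2) := by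
    intro j
    simp [sgn]
    ring
  simp only [h3, Finset.prod_mul_distrib, Finset.prod_const, Finset.card_univ, Fintype.card_fin]
  congr 1
  by_cases h : ∀ j, Even (n j)
  · simp [(h _).neg_one_pow]
  · push Not at h
    obtain ⟨j, hj⟩ := h
    have hj0 : (1 + (-1 : ℚ) ^ n j) / 2 = 0 := by
      rw [(Nat.not_even_iff_odd.mp hj).neg_one_pow]; norm_num
    rw [Finset.prod_eq_zero (Finset.mem_univ j) hj0]
    have hpos : 0 < n j := by
      by_contra h0
      have : n j = 0 := by omega
      simp [this] at hj
    obtain ⟨i, hi⟩ := Finset.card_pos.mp hpos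
    have hi' := (Finset.mem_filter.mp hi).2
    rw [Finset.prod_eq_zero (Finset.mem_univ i)]
    rw [hi']
    exact hj0

/-- The summand computing the `k`-th moment of `ssac`: the indicator of `k` linear equations times
the parity weight. -/
def momentWeight (k : ℕ) (x : Fin k × Fin 4 → ℤ) : ℚ :=
  (∏ j, if x (j, 0) - x (j, 1) = x (j, 2) - x (j, 3) then 1 else 0) * evenWeight x

/-- The `k`-th moment is a weighted count of the points of the open cube `(0, ℓ + 1)^(4k)`. -/
lemma expect_ssac_pow (k ℓ : ℕ) :
    expect ℓ (fun f => ssac f ^ k) = ((∑ v ∈ Fintype.piFinset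
      (fun _ : Fin k × Fin 4 => Finset.Ioo (0 : ℤ) ((ℓ : ℤ) + 1)), momentWeight k v : ℚ) : ℝ) := by
  classical
  have h1 : ∑ v ∈ Fintype.piFinset
      (fun _ : Fin k × Fin 4 => Finset.Ioo (0 : ℤ) ((ℓ : ℤ) + 1)), momentWeight k v =
      ∑ x : Fin k × Fin 4 → Fin ℓ, momentWeight k (fun i => ((x i : ℕ) : ℤ) + 1) := by
    symm
    refine Finset.sum_bij (fun x _ i => ((x i : ℕ) : ℤ) + 1) ?_ ?_ ?_ ?_
    · intro x _
      simp only [Fintype.mem_piFinset, Finset.mem_Ioo]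
      intro i
      have := (x i).2
      omega
    · intro x _ y _ hxy
      ext i
      have : ((x i : ℕ) : ℤ) + 1 = (y i : ℕ) + 1 := congrFun hxy i
      omega
    · intro v hv
      simp only [Fintype.mem_piFinset, Finset.mem_Ioo] at hv
      refine ⟨fun i => ⟨(v i - 1).toNat, by have := hv i; omega⟩, Finset.mem_univ _, ?_⟩
      ext i
      have := hv i
      simp
      omega
    · intro x _
      rfl
  have h2 : ∀ x : Fin k × Fin 4 → Fin ℓ, momentWeight k (fun i => ((x i : ℕ) : ℤ) + 1) =
      (∏ j, if ((x (j, 0) : ℕ) : ℤ) - (x (j, 1) : ℕ) = (x (j, 2) : ℕ) - (x (j, 3) : ℕ)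
        then 1 else 0) * evenWeight x := by
    intro x
    unfold momentWeight evenWeight
    simp [Fin.ext_iff]
  rw [h1]
  simp only [h2]
  unfold _root_.expect
  rw [div_eq_iff (by positivity)]
  simp only [ssac_seqOf, ← Rat.cast_pow, ← Rat.cast_sum]
  rw [show (2 : ℝ) ^ ℓ = ((2 ^ ℓ : ℚ) : ℝ) by push_cast; rfl, ← Rat.cast_mul]
  congr 1
  simp only [Fintype.sum_pow]
  rw [Finset.sum_comm, Finset.sum_mul]
  refine (Fintype.sum_equiv (Equiv.curry (Fin k) (Fin 4) (Fin ℓ)) _ _ fun x => ?_).symm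
  rw [mul_assoc, mul_comm (evenWeight x), ← sum_prod_sgn, Finset.mul_sum]
  refine Finset.sum_congr rfl fun ε _ => ?_
  rw [Finset.prod_mul_distrib, Fintype.prod_prod_type]
  rfl

/-! ### Quasi-polynomiality of the moments -/

lemma pqp_momentWeight (k : ℕ) : momentWeight k ∈ pqp (Fin k × Fin 4 → ℤ) := by
  let e : Fin k × Fin 4 → ((Fin k × Fin 4 → ℤ) →+ ℚ) := fun i =>
    (Int.castAddHom ℚ).comp (Pi.evalAddMonoidHom (fun _ => ℤ) i)
  have he : ∀ i x, e i x = (x i : ℚ) := fun i x => rfl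
  unfold momentWeight evenWeight
  refine pqp_mul (pqp_prod _ _ fun j _ => ?_) (pqp_prod _ _ fun i _ => ?_)
  · convert pqp_eq (e (j, 0) - e (j, 1)) (e (j, 2) - e (j, 3)) using 1
    ext x
    simp only [AddMonoidHom.sub_apply, he]
    congr 1
    norm_cast
  · simp only [div_eq_mul_inv]
    refine pqp_mul (pqp_add (pqp_const 1) (pqp_prod _ _ fun i' _ => ?_)) (pqp_const _)
    convert pqp_sub (pqp_const 1) (pqp_mul (pqp_const 2) (pqp_eq (e i') (e i))) using 1
    ext x
    simp only [he, Int.cast_inj]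
    split_ifs <;> norm_num

/-- Every moment of `ssac` is a quasi-polynomial in `ℓ`. The positive parameter is `t = ℓ + 1`,
so that `ℓ = 0` is covered. -/
lemma exists_qp_moment (k : ℕ) : ∃ u, IsQP u ∧ ∀ ℓ : ℕ,
    expect ℓ (fun f => ssac f ^ k) = ((u (ℓ : ℤ) : ℚ) : ℝ) := by
  obtain ⟨u, hu, h⟩ := exists_qp_sum_cube (pqp_momentWeight k)
  refine ⟨_, hu.shift 1, fun ℓ => ?_⟩
  rw [expect_ssac_pow, h _ (by positivity)]

lemma centralMoment_eq (p ℓ : ℕ) (v : (ℤ → ℤ) → ℝ) :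
    centralMoment p ℓ v = ∑ k ∈ Finset.range (p + 1),
      expect ℓ (fun f => v f ^ k) * (-expect ℓ v) ^ (p - k) * (p.choose k : ℝ) := by
  unfold centralMoment
  generalize expect ℓ v = c
  unfold _root_.expect
  simp only [sub_eq_add_neg, add_pow]
  rw [Finset.sum_comm, Finset.sum_div]
  refine Finset.sum_congr rfl fun k _ => ?_
  rw [← Finset.sum_mul, ← Finset.sum_mul]
  ring

/-- The `p`-th central moment of `ssac` is a quasi-polynomial function of `ℓ`
with rational coefficients. -/
theorem central_moment_ssac_quasiPolynomial (p : ℕ) :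
    ∃ m : ℕ, 0 < m ∧ ∃ q : ℕ → Polynomial ℚ,
      ∀ ℓ : ℕ, centralMoment p ℓ ssac = (((q (ℓ % m)).eval (ℓ : ℚ) : ℚ) : ℝ) := by
  choose u hu hE using exists_qp_moment
  have hqp : IsQP (fun z => ∑ k ∈ Finset.range (p + 1),
      u k z * ((-1) * u 1 z) ^ (p - k) * (p.choose k : ℚ)) :=
    IsQP.sum _ _ fun k _ =>
      ((hu k).mul (((IsQP.const (-1)).mul (hu 1)).pow _)).mul (IsQP.const _)
  obtain ⟨m, hm, q, hq, hqe⟩ := hqp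
  refine ⟨m, hm, fun n => q n, fun ℓ => ?_⟩
  have h1 : expect ℓ ssac = ((u 1 ℓ : ℚ) : ℝ) := by simpa using hE 1 ℓ
  have hmod : q ((ℓ % m : ℕ) : ℤ) = q ℓ := by
    have := hq.int_mul (ℓ / m : ℕ) ((ℓ % m : ℕ) : ℤ)
    rw [← this]
    congr 1
    simp only [Int.cast_id]
    have := Nat.mod_add_div' ℓ m
    exact_mod_cast this
  have h2 := hqe ℓ
  rw [Int.cast_natCast] at h2
  simp only [hmod]
  rw [centralMoment_eq, ← h2, h1]
  simp only [hE]
  push_cast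
  refine Finset.sum_congr rfl fun k _ => ?_
  rw [neg_one_mul]
end
end

section
/- Let p ∈ ℕ and let 𝒫 be a contributory and separable partition of [p]×[2]×[2] with quotient 𝔓. If 𝒫 is not principal, then |𝒫| - |𝔓| ≤ ⌈3p/2⌉ - 1. Moreover, if p is odd, then there is no principal partition of [p]×[2]×[2]. -/
/-!
Separability makes the equation sets `S` of the classes a partition of `Fin p`
(`sum_card_blocks`). The `k` classes with equation set `S` are disjoint subsets of
`S × Fin 2 × Fin 2`, and each has at least `|S|` elements, so `k ≤ 4` (`block_card_le`).
Moreover `|S| ≥ 2`: on a block with a single equation the restriction of the partition would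
consist of full, hence even, classes, contradicting local oddness (`two_le_card_block`).
Therefore `2 * (k - 1) ≤ 6 ≤ 3 * |S|` on every block, and the sum over all blocks is at most
`3 * p`. A class of cardinality other than `2` has at least four elements; its block then has
`|S| ≥ 3`, or `|S| = 2` and `k ≤ 3`, so the inequality is strict there
(`two_mul_block_lt`). In a principal partition every `|S|` is exactly `2`, so `p` is even.
-/

/-- Index set `[p] × [2] × [2]`. -/
abbrev Idx (p : ℕ) := Fin p × Fin 2 × Fin 2

/-- `β` and `γ` lie in the same class of the partition `Pt`. -/
def SameClass {p : ℕ} (Pt : Finpartition (Finset.univ : Finset (Idx p))) (β γ : Idx p) : Prop :=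
  ∃ P ∈ Pt.parts, β ∈ P ∧ γ ∈ P

/-- The system of equations `τ(e,0,0)+τ(e,0,1) = τ(e,1,0)+τ(e,1,1)`. -/
def EqCond {p : ℕ} (τ : Idx p → ℕ) : Prop :=
  ∀ e : Fin p, τ (e, 0, 0) + τ (e, 0, 1) = τ (e, 1, 0) + τ (e, 1, 1)

/-- `As(Pt,=,ℓ)`. -/
def AsEq {p : ℕ} (Pt : Finpartition (Finset.univ : Finset (Idx p))) (ℓ : ℕ) :
    Set (Idx p → ℕ) :=
  {τ | (∀ i, τ i < ℓ) ∧ EqCond τ ∧ ∀ β γ, τ β = τ γ ↔ SameClass Pt β γ}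

/-- `As(⪰Pt,=,ℓ)`. -/
def AsGe {p : ℕ} (Pt : Finpartition (Finset.univ : Finset (Idx p))) (ℓ : ℕ) :
    Set (Idx p → ℕ) :=
  {τ | (∀ i, τ i < ℓ) ∧ EqCond τ ∧ ∀ β γ, SameClass Pt β γ → τ β = τ γ}

/-- `Pt` is satisfiable. -/
def Satisfiable {p : ℕ} (Pt : Finpartition (Finset.univ : Finset (Idx p))) : Prop :=
  ∃ τ : Idx p → ℕ, EqCond τ ∧ ∀ β γ, τ β = τ γ ↔ SameClass Pt β γ

/-- `Pt` is globally even, locally odd. -/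
def GELO {p : ℕ} (Pt : Finpartition (Finset.univ : Finset (Idx p))) : Prop :=
  (∀ P ∈ Pt.parts, Even P.card) ∧
    ∀ e : Fin p, ∃ P ∈ Pt.parts, Odd ((P.filter fun x => x.1 = e).card)

/-- `Pt` is contributory. -/
def Contributory {p : ℕ} (Pt : Finpartition (Finset.univ : Finset (Idx p))) : Prop :=
  Satisfiable Pt ∧ GELO Pt

/-- The set of equations met by a class. -/
def eqnsOf {p : ℕ} (P : Finset (Idx p)) : Finset (Fin p) := P.image fun x => x.1

/-- `Pt` is separable: any two classes are equation-identical or equation-disjoint. -/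
def Separable {p : ℕ} (Pt : Finpartition (Finset.univ : Finset (Idx p))) : Prop :=
  ∀ P ∈ Pt.parts, ∀ Q ∈ Pt.parts, eqnsOf P = eqnsOf Q ∨ Disjoint (eqnsOf P) (eqnsOf Q)

/-- The number of classes of the quotient of `Pt` by equation-identicality. -/
def quotCard {p : ℕ} (Pt : Finpartition (Finset.univ : Finset (Idx p))) : ℕ :=
  (Pt.parts.image eqnsOf).card

/-- A twin class. -/
def IsTwin {p : ℕ} (P : Finset (Idx p)) : Prop :=
  ∃ e : Fin p, ∃ s : Fin 2, (e, s, 0) ∈ P ∧ (e, s, 1) ∈ P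

/-- `Pt` is principal. -/
def Principal {p : ℕ} (Pt : Finpartition (Finset.univ : Finset (Idx p))) : Prop :=
  Contributory Pt ∧ Separable Pt ∧ ∀ P ∈ Pt.parts, P.card = 2

/-- Membership in the group `W^(p)` of symmetries. -/
def InW {p : ℕ} (π : Equiv.Perm (Idx p)) : Prop :=
  ∃ ε : Equiv.Perm (Fin p), ∃ σ : Fin p → Equiv.Perm (Fin 2),
    ∃ F : Fin p → Fin 2 → Equiv.Perm (Fin 2),
      ∀ (e : Fin p) (s v : Fin 2),
        π (e, s, v) = (ε e, σ (ε e) s, F (ε e) (σ (ε e) s) v)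

/-- The restriction of `Pt` to `{e} × [2] × [2]`. -/
def restrictTo {p : ℕ} (Pt : Finpartition (Finset.univ : Finset (Idx p))) (e : Fin p) :
    Finset (Finset (Idx p)) :=
  (Pt.parts.image fun P => P.filter fun x => x.1 = e).filter fun Q => Q.Nonempty

variable {p : ℕ} {Pt : Finpartition (Finset.univ : Finset (Idx p))}

lemma mem_eqnsOf {P : Finset (Idx p)} {e : Fin p} : e ∈ eqnsOf P ↔ ∃ x ∈ P, x.1 = e := by
  simp [eqnsOf]

lemma eqnsOf_eq_of_mem (hs : Separable Pt) {P Q : Finset (Idx p)} (hP : P ∈ Pt.parts)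
    (hQ : Q ∈ Pt.parts) {e : Fin p} (heP : e ∈ eqnsOf P) (heQ : e ∈ eqnsOf Q) :
    eqnsOf P = eqnsOf Q :=
  (hs P hP Q hQ).resolve_right fun h => Finset.disjoint_left.1 h heP heQ

lemma sum_card_blocks (hs : Separable Pt) :
    ∑ f ∈ Pt.parts.image eqnsOf, f.card = p := by
  have hd : ∀ f ∈ Pt.parts.image eqnsOf, ∀ g ∈ Pt.parts.image eqnsOf, f ≠ g →
      Disjoint f g := by
    intro f hf g hg hfg
    obtain ⟨P, hP, rfl⟩ := Finset.mem_image.1 hf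
    obtain ⟨Q, hQ, rfl⟩ := Finset.mem_image.1 hg
    exact (hs P hP Q hQ).resolve_left hfg
  have hu : (Pt.parts.image eqnsOf).biUnion (fun f => f) = Finset.univ := by
    ext e
    simp only [Finset.mem_biUnion, Finset.mem_image, Finset.mem_univ, iff_true]
    obtain ⟨P, hP, hx⟩ := Pt.exists_mem (Finset.mem_univ ((e, 0, 0) : Idx p))
    exact ⟨_, ⟨P, hP, rfl⟩, mem_eqnsOf.2 ⟨_, hx, rfl⟩⟩
  have h := Finset.card_biUnion (t := fun f => f) hd
  rw [hu, Finset.card_univ, Fintype.card_fin] at h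
  exact h.symm

lemma two_le_card_block (hg : GELO Pt) (hs : Separable Pt) {P : Finset (Idx p)}
    (hP : P ∈ Pt.parts) : 2 ≤ (eqnsOf P).card := by
  by_contra! hlt
  have hpos : 0 < (eqnsOf P).card :=
    Finset.card_pos.2 ((Pt.nonempty_of_mem_parts hP).image _)
  obtain ⟨e, he⟩ := Finset.card_eq_one.1 (show (eqnsOf P).card = 1 by omega)
  obtain ⟨Q, hQ, hodd⟩ := hg.2 e
  obtain ⟨x, hx⟩ := Finset.card_pos.1 hodd.pos
  rw [Finset.mem_filter] at hx
  have hQe : eqnsOf Q = {e} :=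
    (eqnsOf_eq_of_mem hs hQ hP (mem_eqnsOf.2 ⟨x, hx⟩) (by simp [he])).trans he
  have hfull : (Q.filter fun x => x.1 = e) = Q := by
    refine Finset.filter_true_of_mem fun y hy => ?_
    have : y.1 ∈ eqnsOf Q := mem_eqnsOf.2 ⟨y, hy, rfl⟩
    simpa [hQe] using this
  rw [hfull] at hodd
  exact Nat.not_even_iff_odd.2 hodd (hg.1 Q hQ)

/-- The classes of a block are disjoint and cover at most four elements per equation. -/
lemma sum_card_block_le (f : Finset (Fin p)) :
    ∑ Q ∈ Pt.parts with eqnsOf Q = f, Q.card ≤ 4 * f.card := by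
  have hd : ∀ Q ∈ Pt.parts.filter (fun Q => eqnsOf Q = f),
      ∀ R ∈ Pt.parts.filter (fun Q => eqnsOf Q = f), Q ≠ R → Disjoint Q R :=
    fun Q hQ R hR h => Pt.disjoint (Finset.mem_filter.1 hQ).1 (Finset.mem_filter.1 hR).1 h
  have hsub : (Pt.parts.filter (fun Q => eqnsOf Q = f)).biUnion (fun Q => Q) ⊆
      f ×ˢ (Finset.univ : Finset (Fin 2 × Fin 2)) := by
    intro x hx
    obtain ⟨Q, hQ, hxQ⟩ := Finset.mem_biUnion.1 hx
    rw [← (Finset.mem_filter.1 hQ).2]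
    exact Finset.mem_product.2 ⟨mem_eqnsOf.2 ⟨x, hxQ, rfl⟩, Finset.mem_univ _⟩
  have h := Finset.card_le_card hsub
  rw [Finset.card_biUnion hd, Finset.card_product] at h
  simpa [mul_comm] using h

lemma block_card_le {f : Finset (Fin p)} (hf : 2 ≤ f.card) :
    (Pt.parts.filter fun Q => eqnsOf Q = f).card ≤ 4 := by
  have h := Finset.card_nsmul_le_sum (Pt.parts.filter fun Q => eqnsOf Q = f)
    Finset.card f.card fun Q hQ => by
      rw [← (Finset.mem_filter.1 hQ).2]; exact Finset.card_image_le
  have h' := h.trans (sum_card_block_le f)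
  rw [smul_eq_mul] at h'
  exact Nat.le_of_mul_le_mul_right h' (by omega)

/-- A class with at least four elements makes the estimate on its block strict. -/
lemma two_mul_block_lt {P : Finset (Idx p)} (hP : P ∈ Pt.parts) (h4 : 4 ≤ P.card)
    (h2 : 2 ≤ (eqnsOf P).card) :
    2 * (Pt.parts.filter fun Q => eqnsOf Q = eqnsOf P).card < 3 * (eqnsOf P).card + 2 := by
  have hk := block_card_le (Pt := Pt) h2
  rcases h2.lt_or_eq with h3 | h3
  · omega
  · have hmem : P ∈ Pt.parts.filter fun Q => eqnsOf Q = eqnsOf P :=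
      Finset.mem_filter.2 ⟨hP, rfl⟩
    have hle := sum_card_block_le (Pt := Pt) (eqnsOf P)
    rw [← Finset.add_sum_erase _ _ hmem] at hle
    have h := Finset.card_nsmul_le_sum
      ((Pt.parts.filter fun Q => eqnsOf Q = eqnsOf P).erase P) (fun Q => Q.card) 2 fun Q hQ => by
        rw [h3, ← (Finset.mem_filter.1 (Finset.mem_of_mem_erase hQ)).2]
        exact Finset.card_image_le
    rw [Finset.card_erase_of_mem hmem, smul_eq_mul] at h
    omega

lemma even_of_principal (h : Principal Pt) : Even p := by
  obtain ⟨hc, hs, h2⟩ := h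
  have hsum := sum_card_blocks hs
  rw [Finset.sum_congr rfl (g := fun _ => 2)] at hsum
  · rw [Finset.sum_const, smul_eq_mul] at hsum
    exact ⟨_, hsum.symm.trans (mul_two _)⟩
  · intro f hf
    obtain ⟨P, hP, rfl⟩ := Finset.mem_image.1 hf
    exact le_antisymm (Finset.card_image_le.trans (h2 P hP).le) (two_le_card_block hc.2 hs hP)

/-- If a contributory separable partition is not principal, then
`|𝒫| - |𝔓| ≤ ⌈3p/2⌉ - 1`; moreover, for odd `p` there are no principal
partitions. -/
theorem not_principal_bound {p : ℕ}
    (Pt : Finpartition (Finset.univ : Finset (Idx p)))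
    (hc : Contributory Pt) (hs : Separable Pt) :
    (¬Principal Pt → Pt.parts.card - quotCard Pt ≤ (3 * p + 1) / 2 - 1) ∧
    (Odd p → ∀ Qt : Finpartition (Finset.univ : Finset (Idx p)), ¬Principal Qt) := by
  refine ⟨fun hn => ?_, fun hodd Qt hQt => Nat.not_even_iff_odd.2 hodd (even_of_principal hQt)⟩
  obtain ⟨P, hP, hP2⟩ : ∃ P ∈ Pt.parts, P.card ≠ 2 := by
    by_contra! h
    exact hn ⟨hc, hs, h⟩
  have h4 : 4 ≤ P.card := by
    have hpos := Finset.card_pos.2 (Pt.nonempty_of_mem_parts hP)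
    obtain ⟨m, hm⟩ := hc.2.1 P hP
    omega
  have hlt : ∑ f ∈ Pt.parts.image eqnsOf, 2 * (Pt.parts.filter fun Q => eqnsOf Q = f).card <
      ∑ f ∈ Pt.parts.image eqnsOf, (3 * f.card + 2) := by
    refine Finset.sum_lt_sum (fun f hf => ?_) ⟨eqnsOf P, Finset.mem_image_of_mem _ hP,
      two_mul_block_lt hP h4 (two_le_card_block hc.2 hs hP)⟩
    obtain ⟨Q, hQ, rfl⟩ := Finset.mem_image.1 hf
    have h2 := two_le_card_block hc.2 hs hQ
    have hk := block_card_le (Pt := Pt) h2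
    omega
  rw [← Finset.mul_sum, ← Finset.card_eq_sum_card_image, Finset.sum_add_distrib,
    ← Finset.mul_sum, sum_card_blocks hs, Finset.sum_const, smul_eq_mul] at hlt
  unfold quotCard
  omega
end
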